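/- Let → be a type-invariant transition relation over a finite state set Q with initial states I ⊆ Q and final states F ⊆ Q. There exists an accepting run, i.e. an infinite run whose first configuration has a state in I and in which some state f ∈ F occurs in infinitely many configurations, if and only if there exist a state f ∈ F, n-tuples w̄, v̄ with typ_C(w̄) = typ_C(v̄), a finite run r₁ from a configuration with state in I to the configuration (f, v̄), and a noncontracting loop r₂ starting in the configuration (f, w̄). -/

import Mathlib

namespace CLTL

/-- A word is a finite sequence of rationals. -/
abbrev Word := List ℚ

/-- Lexicographic order on lists over a linear order: `w ⊑ v` iff `w` is a prefix of `v`,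
or they branch at some position with the letter of `w` smaller. -/
def lexLe {α : Type*} [LinearOrder α] (w v : List α) : Prop :=
  w <+: v ∨ ∃ (p : List α) (a b : α), a < b ∧ (p ++ [a]) <+: w ∧ (p ++ [b]) <+: v

/-- Longest common prefix of two lists. -/
def lcp {α : Type*} [DecidableEq α] : List α → List α → List α
  | a :: w, b :: v => if a = b then a :: lcp w v else []
  | _, _ => []

/-- Iterated longest common prefix of a nonempty list of words. -/
def listLCP : List Word → Word
  | [] => []
  | [x] => x
  | x :: xs => lcp x (listLCP xs)

/-- Insertion of an `m`-gap at `u`. -/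
def iota (u : Word) (m : ℕ) (w : Word) : Word :=
  if u <+: w then u ++ List.replicate m 0 ++ w.drop u.length else w

/-- The maximal common ancestor tree of a tuple `w` together with constants `C`:
`{ε}` together with all iterated longest common prefixes of nonempty subsets of entries. -/
def MCAT (C : List Word) {k : ℕ} (w : Fin k → Word) : Set Word :=
  insert [] { x | ∃ I : Finset (Fin (k + C.length)),
    I.Nonempty ∧ x = listLCP (I.toList.map (Fin.append w C.get)) }

/-- `h` is the induced isomorphism witnessing `typ_C(w) = typ_C(v)`. -/
def IsInducedIso (C : List Word) {k : ℕ} (w v : Fin k → Word) (h : Word → Word) : Prop :=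
  Set.BijOn h (MCAT C w) (MCAT C v) ∧
  (∀ x ∈ MCAT C w, ∀ y ∈ MCAT C w,
    (x <+: y ↔ h x <+: h y) ∧ (lexLe x y ↔ lexLe (h x) (h y))) ∧
  (∀ c ∈ C, h c = c) ∧
  (∀ i : Fin k, h (w i) = v i)

/-- `typ_C(w) = typ_C(v)`. -/
def SameTyp (C : List Word) {k : ℕ} (w v : Fin k → Word) : Prop :=
  ∃ h : Word → Word, IsInducedIso C w v h

/-- The stretching condition on an isomorphism `h` of `MCAT_C(w)`:
`|h e| - |h d| ≥ |e| - |d|` whenever `d` is a proper prefix of `e`. -/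
def StretchCond (C : List Word) {k : ℕ} (w : Fin k → Word) (h : Word → Word) : Prop :=
  ∀ d ∈ MCAT C w, ∀ e ∈ MCAT C w, d <+: e → d ≠ e →
    e.length + (h d).length ≤ (h e).length + d.length

/-- `w ≼* v` for tuples of words. -/
def Stretch (C : List Word) {k : ℕ} (w v : Fin k → Word) : Prop :=
  ∃ h : Word → Word, IsInducedIso C w v h ∧ StretchCond C w h

/-- `≼*` on configurations. -/
def ConfigLe (C : List Word) {Q : Type*} {n : ℕ}
    (c d : Q × (Fin n → Word)) : Prop :=
  c.1 = d.1 ∧ Stretch C c.2 d.2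

/-- A transition relation is type-invariant. -/
def TypeInvariant (C : List Word) {Q : Type*} {n : ℕ}
    (step : (Q × (Fin n → Word)) → (Q × (Fin n → Word)) → Prop) : Prop :=
  ∀ (q p : Q) (w v w' v' : Fin n → Word),
    step (q, w) (p, v) → SameTyp C (Fin.append w v) (Fin.append w' v') →
      step (q, w') (p, v')

/-- Finite runs, indexed by `Fin (N+1)`. -/
def IsFinRun {Q : Type*} {n : ℕ}
    (step : (Q × (Fin n → Word)) → (Q × (Fin n → Word)) → Prop)
    {N : ℕ} (r : Fin (N + 1) → Q × (Fin n → Word)) : Prop :=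
  ∀ i : Fin N, step (r i.castSucc) (r i.succ)

/-- Infinite runs. -/
def IsInfRun {Q : Type*} {n : ℕ}
    (step : (Q × (Fin n → Word)) → (Q × (Fin n → Word)) → Prop)
    (r : ℕ → Q × (Fin n → Word)) : Prop :=
  ∀ i : ℕ, step (r i) (r (i + 1))

/-- The pair `(w, v)` (of tuples of equal type) is contracting. -/
def ContractingPair (C : List Word) {k : ℕ} (w v : Fin k → Word) : Prop :=
  ∃ h : Word → Word, IsInducedIso C w v h ∧
    ((∃ d ∈ MCAT C w, h d <+: d ∧ h d ≠ d) ∨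
     (∃ d ∈ MCAT C w, ∃ e ∈ MCAT C w,
        d <+: e ∧ d ≠ e ∧ h e = e ∧ d <+: h d ∧ d ≠ h d))

/-- A set of words `T` has `n`-gaps above `B`. -/
def HasGaps (n : ℕ) (T B : Set Word) : Prop :=
  ∀ d ∈ T, ∀ e ∈ T, d <+: e → d ≠ e → (∀ b ∈ B, ¬ e <+: b) → n + d.length < e.length

/-!
An injection of the tree of words that respects prefixes, branching and the constants preserves
types over `C`, hence maps runs to runs. If the isomorphism `h : MCAT_C(w) → MCAT_C(v)` does not
shrink distances along branches, it extends to such a tree embedding `H`: between consecutive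
nodes the letters are aligned with the upper node, and the surplus of `v` is skipped right after
the lower one. A loop from `(f, w)` to `(f, v)` with `w ≼* v` thus unfolds into the infinite run
`r, H r, H² r, …`. Conversely, `≼*` is a well-quasi-order by Dickson's lemma, so a run that visits
`f` infinitely often contains a loop with `w ≼* v`, and such a loop is noncontracting.

A noncontracting loop is made to satisfy `w ≼* v` by a tree embedding that inserts zeros after
the nodes `h e` that are not prefixes of `e`: the distance from `h d` to `h e` grows by this
padding, which is chosen to exceed the padded length of `e`. If `h e` is a prefix of `e`, then
`h e = e` and `h d` is a prefix of `d`, as the loop is noncontracting. The choice of the paddings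
is not circular, because `h e` comes after all prefixes of `e` in the linear order that lists
first, from left to right, the words not extending any `h d` to the left of `d`, and then, from
right to left, the others. Finally, a large padding of all nonconstant nodes fits the run leading
to the loop to the start of the unfolded loop.
-/

section Words

variable {α : Type*} {p x y z x' y' : List α} {a b : α}

theorem exists_concat_prefix (h : p <+: x) (hne : p ≠ x) : ∃ a, p ++ [a] <+: x := by
  obtain ⟨_ | ⟨a, t⟩, rfl⟩ := h
  · simp at hne
  · exact ⟨a, t, by simp⟩

theorem concat_prefix_unique (ha : p ++ [a] <+: x) (hb : p ++ [b] <+: x) : a = b := by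
  simpa using (List.prefix_of_prefix_length_le ha hb (by simp)).eq_of_length (by simp)

theorem prefix_of_concat_prefix (h : p ++ [a] <+: x) : p <+: x :=
  (List.prefix_append p [a]).trans h

theorem ne_of_concat_prefix (h : p ++ [a] <+: x) : p ≠ x := by
  rintro rfl
  simpa using h.length_le

theorem eq_of_forall_prefix_iff (h : ∀ z, z <+: x ↔ z <+: y) : x = y :=
  antisymm ((h x).1 List.prefix_rfl) ((h y).2 List.prefix_rfl)

theorem eq_iff_prefix_and_prefix : x = y ↔ x <+: y ∧ y <+: x :=
  ⟨fun h => h ▸ ⟨List.prefix_rfl, List.prefix_rfl⟩, fun h => antisymm h.1 h.2⟩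

section LCP

variable [DecidableEq α]

theorem prefix_lcp_iff : ∀ {z x y : List α}, z <+: lcp x y ↔ z <+: x ∧ z <+: y
  | z, [], y => by simpa [lcp] using fun h : z = [] => h ▸ List.nil_prefix
  | z, a :: x, [] => by simpa [lcp] using fun h : z = [] => h ▸ List.nil_prefix
  | [], a :: x, b :: y => by simp
  | c :: z, a :: x, b :: y => by
    by_cases h : a = b
    · subst h
      simp only [lcp, if_true, List.cons_prefix_cons, prefix_lcp_iff]
      tauto
    · simp only [lcp, if_neg h, List.prefix_nil, List.cons_prefix_cons, reduceCtorEq, false_iff]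
      rintro ⟨⟨rfl, -⟩, rfl, -⟩
      exact h rfl

theorem lcp_prefix_left : lcp x y <+: x :=
  (prefix_lcp_iff.1 List.prefix_rfl).1

theorem lcp_prefix_right : lcp x y <+: y :=
  (prefix_lcp_iff.1 List.prefix_rfl).2

theorem lcp_eq_left (h : x <+: y) : lcp x y = x :=
  antisymm lcp_prefix_left (prefix_lcp_iff.2 ⟨List.prefix_rfl, h⟩)

theorem lcp_comm (x y : List α) : lcp x y = lcp y x :=
  eq_of_forall_prefix_iff fun z => by rw [prefix_lcp_iff, prefix_lcp_iff, and_comm]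

theorem lcp_eq_of_concat_prefix (hab : a ≠ b) (hx : p ++ [a] <+: x) (hy : p ++ [b] <+: y) :
    lcp x y = p := by
  by_contra hne
  obtain ⟨c, hc⟩ := exists_concat_prefix
    (prefix_lcp_iff.2 ⟨prefix_of_concat_prefix hx, prefix_of_concat_prefix hy⟩) (Ne.symm hne)
  exact hab ((concat_prefix_unique hx (hc.trans lcp_prefix_left)).trans
    (concat_prefix_unique (hc.trans lcp_prefix_right) hy))

theorem prefix_listLCP_iff {z : Word} : ∀ {l : List Word}, l ≠ [] →
    (z <+: listLCP l ↔ ∀ x ∈ l, z <+: x)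
  | [x], _ => by simp [listLCP]
  | x :: y :: l, _ => by
    simp only [listLCP, prefix_lcp_iff, prefix_listLCP_iff (List.cons_ne_nil y l),
      List.forall_mem_cons]

end LCP

section Branches

variable [LinearOrder α]

/-- The branching part of the lexicographic order: `x` and `y` leave a common prefix through
different letters, and the letter of `x` is the smaller one. -/
def Branches (x y : List α) : Prop :=
  ∃ (p : List α) (a b : α), a < b ∧ p ++ [a] <+: x ∧ p ++ [b] <+: y

theorem Branches.mono (h : Branches x y) (hx : x <+: x') (hy : y <+: y') : Branches x' y' := by
  obtain ⟨p, a, b, hab, ha, hb⟩ := h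
  exact ⟨p, a, b, hab, ha.trans hx, hb.trans hy⟩

theorem not_branches_of_prefix_of_prefix (hx : x <+: z) (hy : y <+: z) : ¬ Branches x y := by
  rintro ⟨p, a, b, hab, ha, hb⟩
  exact hab.ne (concat_prefix_unique (ha.trans hx) (hb.trans hy))

theorem Branches.not_prefix (h : Branches x y) : ¬ x <+: y :=
  fun hxy => not_branches_of_prefix_of_prefix hxy List.prefix_rfl h

theorem Branches.not_prefix' (h : Branches x y) : ¬ y <+: x :=
  fun hyx => not_branches_of_prefix_of_prefix List.prefix_rfl hyx h

theorem branches_iff_lexLe_and_not_prefix : Branches x y ↔ lexLe x y ∧ ¬ x <+: y :=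
  ⟨fun h => ⟨Or.inr h, h.not_prefix⟩, fun h => h.1.resolve_left h.2⟩

theorem prefix_or_prefix_or_branches (x y : List α) :
    x <+: y ∨ y <+: x ∨ Branches x y ∨ Branches y x := by
  by_cases hx : lcp x y = x
  · exact Or.inl (hx ▸ lcp_prefix_right)
  by_cases hy : lcp x y = y
  · exact Or.inr (Or.inl (hy ▸ lcp_prefix_left))
  obtain ⟨a, ha⟩ := exists_concat_prefix lcp_prefix_left hx
  obtain ⟨b, hb⟩ := exists_concat_prefix lcp_prefix_right hy
  have hab : a ≠ b := by
    rintro rfl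
    exact ne_of_concat_prefix (prefix_lcp_iff.2 ⟨ha, hb⟩) rfl
  rcases hab.lt_or_gt with hab | hab
  · exact Or.inr (Or.inr (Or.inl ⟨_, a, b, hab, ha, hb⟩))
  · exact Or.inr (Or.inr (Or.inr ⟨_, b, a, hab, hb, ha⟩))

theorem Branches.lt (h : Branches x y) : x < y := by
  obtain ⟨p, a, b, hab, ⟨s, rfl⟩, ⟨t, rfl⟩⟩ := h
  simpa only [List.append_assoc, List.singleton_append] using
    List.append_left_lt (List.cons_lt_cons_iff.2 (Or.inl hab))

theorem lt_of_prefix_of_ne (h : x <+: y) (hne : x ≠ y) : x < y := by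
  obtain ⟨a, t, rfl⟩ := exists_concat_prefix h hne
  simpa using List.append_left_lt (l₁ := x) (List.nil_lt_cons a t)

end Branches

end Words

/-! ### Tree embeddings -/

/-- An embedding of the tree of words: it fixes the root, and the subtrees below the children
of `p` are sent, in order, below different children of `H p`. -/
structure IsTreeEmbedding {α : Type*} [LinearOrder α] (H : List α → List α) : Prop where
  map_nil : H [] = []
  exists_letterMap : ∀ p, ∃ φ : α → α, StrictMono φ ∧ ∀ a, H p ++ [φ a] <+: H (p ++ [a])

namespace IsTreeEmbedding

variable {α : Type*} [LinearOrder α] {H : List α → List α} {x y : List α}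

theorem map_prefix (hH : IsTreeEmbedding H) (h : x <+: y) : H x <+: H y := by
  obtain ⟨t, rfl⟩ := h
  induction t using List.reverseRecOn with
  | nil => simp
  | append_singleton t a ih =>
    obtain ⟨φ, -, hφ⟩ := hH.exists_letterMap (x ++ t)
    rw [← List.append_assoc]
    exact ih.trans (prefix_of_concat_prefix (hφ a))

theorem map_ne_of_prefix (hH : IsTreeEmbedding H) (h : x <+: y) (hne : x ≠ y) : H x ≠ H y := by
  obtain ⟨a, ha⟩ := exists_concat_prefix h hne
  obtain ⟨φ, -, hφ⟩ := hH.exists_letterMap x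
  exact ne_of_concat_prefix ((hφ a).trans (hH.map_prefix ha))

theorem exists_map_concat_prefix (hH : IsTreeEmbedding H) (h : Branches x y) :
    ∃ a b, a < b ∧ H (lcp x y) ++ [a] <+: H x ∧ H (lcp x y) ++ [b] <+: H y := by
  obtain ⟨p, a, b, hab, ha, hb⟩ := h
  obtain ⟨φ, hφ, hp⟩ := hH.exists_letterMap p
  rw [lcp_eq_of_concat_prefix hab.ne ha hb]
  exact ⟨φ a, φ b, hφ hab, (hp a).trans (hH.map_prefix ha), (hp b).trans (hH.map_prefix hb)⟩

theorem map_branches (hH : IsTreeEmbedding H) (h : Branches x y) : Branches (H x) (H y) := by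
  obtain ⟨a, b, hab, ha, hb⟩ := hH.exists_map_concat_prefix h
  exact ⟨_, a, b, hab, ha, hb⟩

theorem prefix_iff (hH : IsTreeEmbedding H) : H x <+: H y ↔ x <+: y := by
  refine ⟨fun h => ?_, hH.map_prefix⟩
  rcases prefix_or_prefix_or_branches x y with hxy | hyx | hxy | hyx
  · exact hxy
  · by_contra hxy
    exact hH.map_ne_of_prefix hyx (fun he => hxy (he ▸ List.prefix_rfl))
      (antisymm (hH.map_prefix hyx) h)
  · exact absurd h (hH.map_branches hxy).not_prefix
  · exact absurd h (hH.map_branches hyx).not_prefix'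

theorem branches_iff (hH : IsTreeEmbedding H) : Branches (H x) (H y) ↔ Branches x y := by
  refine ⟨fun h => ?_, hH.map_branches⟩
  rcases prefix_or_prefix_or_branches x y with hxy | hyx | hxy | hyx
  · exact absurd (hH.map_prefix hxy) h.not_prefix
  · exact absurd (hH.map_prefix hyx) h.not_prefix'
  · exact hxy
  · exact absurd (h.lt.trans (hH.map_branches hyx).lt) (lt_irrefl _)

theorem lexLe_iff (hH : IsTreeEmbedding H) : lexLe (H x) (H y) ↔ lexLe x y :=
  or_congr hH.prefix_iff hH.branches_iff

theorem map_lcp_of_branches (hH : IsTreeEmbedding H) (h : Branches x y) :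
    H (lcp x y) = lcp (H x) (H y) := by
  obtain ⟨a, b, hab, ha, hb⟩ := hH.exists_map_concat_prefix h
  exact (lcp_eq_of_concat_prefix hab.ne ha hb).symm

theorem map_lcp (hH : IsTreeEmbedding H) (x y : List α) : H (lcp x y) = lcp (H x) (H y) := by
  rcases prefix_or_prefix_or_branches x y with hxy | hyx | hxy | hyx
  · rw [lcp_eq_left hxy, lcp_eq_left (hH.map_prefix hxy)]
  · rw [lcp_comm, lcp_eq_left hyx, lcp_comm, lcp_eq_left (hH.map_prefix hyx)]
  · exact hH.map_lcp_of_branches hxy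
  · rw [lcp_comm, hH.map_lcp_of_branches hyx, lcp_comm]

theorem map_listLCP {H : Word → Word} (hH : IsTreeEmbedding H) :
    ∀ l, H (listLCP l) = listLCP (l.map H)
  | [] => hH.map_nil
  | [x] => rfl
  | x :: y :: l => by simp only [listLCP, List.map_cons, hH.map_lcp, hH.map_listLCP (y :: l)]

end IsTreeEmbedding

/-! ### Extending partial embeddings -/

section Extension

variable {α : Type*} [Field α] [LinearOrder α] [IsStrictOrderedRing α]

theorem exists_strictMono_eqOn {f : α → α} (S : Finset α) (hf : StrictMonoOn f S) :
    ∃ φ : α → α, StrictMono φ ∧ Set.EqOn φ f S := by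
  induction S using Finset.induction_on_max with
  | empty => exact ⟨id, strictMono_id, by simp⟩
  | insert m S hm ih =>
    obtain ⟨φ, hφ, hφf⟩ := ih (hf.mono (by simp))
    rcases S.eq_empty_or_nonempty with rfl | hS
    · exact ⟨fun x => f m - m + x, fun x y h => by simpa using h, by simp⟩
    -- Keep `φ` up to the largest old point `s` and continue along the line through `m`.
    set s := S.max' hS with hs
    have hsm : s < m := hm s (S.max'_mem hS)
    have hfsm : f s < f m := hf (by simp [hs, S.max'_mem hS]) (by simp) hsm
    have hr : 0 < (f m - f s) / (m - s) := div_pos (sub_pos.2 hfsm) (sub_pos.2 hsm)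
    have hline : StrictMono fun x => (f m - f s) / (m - s) * (x - s) + f s := fun x y hxy =>
      add_lt_add_left (mul_lt_mul_of_pos_left (sub_lt_sub_right hxy s) hr) _
    refine ⟨fun x => if x ≤ s then φ x else (f m - f s) / (m - s) * (x - s) + f s,
      hφ.ite' hline (fun x y hxy hy => hxy.le.trans hy) fun x y hx hy _ => ?_, fun t ht => ?_⟩
    · calc φ x ≤ φ s := hφ.monotone hx
        _ = f s := hφf (S.max'_mem hS)
        _ < _ := lt_add_of_pos_left _ (mul_pos hr (sub_pos.2 (not_le.1 hy)))
    · rcases Finset.mem_insert.1 ht with rfl | ht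
      · simp [hsm.not_ge, div_mul_cancel₀ _ (sub_pos.2 hsm).ne']
      · simp [hs, S.le_max' t ht, hφf ht]

theorem exists_isTreeEmbedding_eqOn {T : Set (List α)} {V : List α → List α} (hT : T.Finite)
    (hT' : ∀ p a, p ++ [a] ∈ T → p ∈ T) (hV : V [] = [])
    (hφ : ∀ p, ∃ φ : α → α, StrictMonoOn φ {a | p ++ [a] ∈ T} ∧
      ∀ a, p ++ [a] ∈ T → V p ++ [φ a] <+: V (p ++ [a])) :
    ∃ H, IsTreeEmbedding H ∧ Set.EqOn H V T := by
  classical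
  choose φ hφ hVφ using hφ
  have hfin (p : List α) : {a | p ++ [a] ∈ T}.Finite :=
    hT.preimage (fun a _ b _ h => by simpa using h)
  choose ψ hψ hψφ using fun p =>
    exists_strictMono_eqOn (hfin p).toFinset (by simpa using hφ p)
  let H : List α → List α := fun w => List.reverseRecOn w [] fun p a Hp =>
    if p ++ [a] ∈ T then V (p ++ [a]) else Hp ++ [ψ p a]
  have hH (p a) : H (p ++ [a]) = if p ++ [a] ∈ T then V (p ++ [a]) else H p ++ [ψ p a] := by
    simp [H]
  have hHV : Set.EqOn H V T := fun p hp => by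
    rcases p.eq_nil_or_concat' with rfl | ⟨p, a, rfl⟩
    · simp [H, hV]
    · rw [hH, if_pos hp]
  refine ⟨H, ⟨by simp [H], fun p => ⟨ψ p, hψ p, fun a => ?_⟩⟩, hHV⟩
  rw [hH]
  split_ifs with ha
  · rw [hHV (hT' p a ha), hψφ p (by simpa using ha)]
    exact hVφ p a ha
  · exact List.prefix_rfl

end Extension

/-! ### Stretching isomorphisms extend to tree embeddings -/

section Stretching

variable {α ι : Type*} {x y : ι → List α} {p : List α} {a b c : α} {i j j' : ι}

/-- `x i` is the least word of the family `x` above `p`. -/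
def IsLeastAbove (x : ι → List α) (p : List α) (i : ι) : Prop :=
  p <+: x i ∧ ∀ j, p <+: x j → x i <+: x j

/-- The prefix of `y i` that is as far from its end as `p` is from the end of `x i`. -/
def pullback (x y : ι → List α) (i : ι) (p : List α) : List α :=
  (y i).rdrop ((x i).length - p.length)

theorem pullback_prefix : pullback x y i p <+: y i :=
  List.take_prefix _ _

variable [LinearOrder α]

theorem exists_isLeastAbove (hx : ∀ i j, ∃ k, x k = lcp (x i) (x j)) (hp : p <+: x j) :
    ∃ i, IsLeastAbove x p i := by
  obtain ⟨i, hpi, hi⟩ :=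
    exists_minimalFor_of_wellFoundedLT (fun i => p <+: x i) (fun i => (x i).length) ⟨j, hp⟩
  refine ⟨i, hpi, fun j hpj => ?_⟩
  obtain ⟨k, hk⟩ := hx i j
  have hki : x k <+: x i := hk ▸ lcp_prefix_left
  have hpk : p <+: x k := hk ▸ prefix_lcp_iff.2 ⟨hpi, hpj⟩
  rw [← hki.eq_of_length_le (hi hpk hki.length_le), hk]
  exact lcp_prefix_right

/-- The correspondence `x i ↦ y i` between two families of words, closed under longest common
prefixes and containing the root, is an isomorphism for the prefix and the lexicographic order
that does not shrink distances along branches. -/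
structure IsStretching (x y : ι → List α) : Prop where
  root : ∃ i, x i = [] ∧ y i = []
  lcp : ∀ i j, ∃ k, x k = lcp (x i) (x j) ∧ y k = lcp (y i) (y j)
  map_prefix : ∀ i j, x i <+: x j → y i <+: y j
  map_branches : ∀ i j, Branches (x i) (x j) → Branches (y i) (y j)
  length_le : ∀ i j, x i <+: x j → (x j).length + (y i).length ≤ (y j).length + (x i).length

namespace IsStretching

theorem map_eq (h : IsStretching x y) (hij : x i = x j) : y i = y j := by
  rw [eq_iff_prefix_and_prefix] at hij ⊢
  exact hij.imp (h.map_prefix i j) (h.map_prefix j i)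

theorem length_pullback_add (h : IsStretching x y) (hp : p <+: x i) :
    (pullback x y i p).length + (x i).length = (y i).length + p.length := by
  obtain ⟨k, hk, hk'⟩ := h.root
  have hle := h.length_le k i (hk ▸ List.nil_prefix)
  have := hp.length_le
  simp only [hk, hk', List.length_nil] at hle
  simp only [pullback, List.rdrop, List.length_take]
  omega

theorem pullback_eq (h : IsStretching x y) (hi : IsLeastAbove x p i) (hj : x j = p) :
    pullback x y i p = y j := by
  have hij : x i = x j := antisymm (hi.2 j (hj ▸ List.prefix_rfl)) (hj ▸ hi.1)
  rw [pullback, hij, hj, Nat.sub_self, List.rdrop_zero, h.map_eq hij]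

theorem exists_pullback_concat_prefix (h : IsStretching x y) (hi : IsLeastAbove x p i)
    (hj : IsLeastAbove x (p ++ [a]) j) :
    ∃ b, pullback x y i p ++ [b] <+: pullback x y j (p ++ [a]) := by
  have hij : x i <+: x j := hi.2 j (prefix_of_concat_prefix hj.1)
  have hlen := h.length_pullback_add hj.1
  have hlen' := h.length_pullback_add hi.1
  rw [List.length_append, List.length_singleton] at hlen
  suffices hlt : (pullback x y i p).length < (pullback x y j (p ++ [a])).length from
    exists_concat_prefix (List.prefix_of_prefix_length_le
      (pullback_prefix.trans (h.map_prefix i j hij)) pullback_prefix hlt.le)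
      fun he => hlt.ne (congrArg _ he)
  by_cases hp : p = x i
  · have := h.length_le i j hij
    omega
  · -- As `p` is not in the family, all words of the family above `p` share their next letter.
    obtain ⟨c, hc⟩ := exists_concat_prefix hi.1 hp
    obtain rfl := concat_prefix_unique (hc.trans hij) hj.1
    have hji : x i = x j := antisymm hij (hj.2 i hc)
    rw [hji, h.map_eq hji] at hlen'
    omega

theorem letter_lt_letter (h : IsStretching x y) (hi : IsLeastAbove x p i)
    (hj : p ++ [a] <+: x j) (hj' : p ++ [b] <+: x j') (hab : a < b) {a' b' : α}
    (ha' : pullback x y i p ++ [a'] <+: y j) (hb' : pullback x y i p ++ [b'] <+: y j') :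
    a' < b' := by
  obtain ⟨k, hk, hk'⟩ := h.lcp j j'
  rw [lcp_eq_of_concat_prefix hab.ne hj hj'] at hk
  rw [h.pullback_eq hi hk] at ha' hb'
  obtain ⟨q, c, d, hcd, hc, hd⟩ := h.map_branches j j' ⟨p, a, b, hab, hj, hj'⟩
  rw [lcp_eq_of_concat_prefix hcd.ne hc hd] at hk'
  rw [hk'] at ha' hb'
  rwa [concat_prefix_unique ha' hc, concat_prefix_unique hb' hd]

end IsStretching

theorem IsStretching.exists_isTreeEmbedding {α : Type*} [Field α] [LinearOrder α]
    [IsStrictOrderedRing α] [Finite ι] {x y : ι → List α} (h : IsStretching x y) :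
    ∃ H, IsTreeEmbedding H ∧ ∀ i, H (x i) = y i := by
  have : Nonempty ι := ⟨h.root.choose⟩
  choose! m hm using fun p (hp : ∃ j, p <+: x j) =>
    exists_isLeastAbove (fun i j => (h.lcp i j).imp fun k hk => hk.1) hp.choose_spec
  have hV (i : ι) : pullback x y (m (x i)) (x i) = y i :=
    h.pullback_eq (hm _ ⟨i, List.prefix_rfl⟩) rfl
  have hparent {p : List α} {a : α} (hp : ∃ j, p ++ [a] <+: x j) : ∃ j, p <+: x j :=
    hp.imp fun j => prefix_of_concat_prefix
  choose! φ hφ using fun p a (hp : ∃ j, p ++ [a] <+: x j) =>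
    h.exists_pullback_concat_prefix (hm p (hparent hp)) (hm (p ++ [a]) hp)
  have hfin : {p | ∃ j, p <+: x j}.Finite := by
    refine (Set.finite_iUnion fun i => (x i).inits.finite_toSet).subset ?_
    rintro p ⟨j, hj⟩
    exact Set.mem_iUnion.2 ⟨j, (List.mem_inits _ _).2 hj⟩
  have hroot : pullback x y (m []) [] = [] := by
    obtain ⟨i, hi, hi'⟩ := h.root
    simpa only [hi, hi'] using hV i
  obtain ⟨H, hH, hHV⟩ := exists_isTreeEmbedding_eqOn (V := fun p => pullback x y (m p) p) hfin
    (fun p a => hparent) hroot fun p => ⟨φ p, fun a ha b hb hab =>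
      h.letter_lt_letter (hm p (hparent ha)) (hm _ ha).1 (hm _ hb).1 hab
        ((hφ p a ha).trans pullback_prefix) ((hφ p b hb).trans pullback_prefix), hφ p⟩
  exact ⟨H, hH, fun i => (hHV ⟨i, List.prefix_rfl⟩).trans (hV i)⟩

end Stretching

/-! ### Padding -/

section Padding

variable {α : Type*} [Zero α] {g : List α → ℕ} {d e : List α}

/-- The padded copy of a word: after the last letter of every nonempty prefix `p`, `g p` zeros
are inserted. -/
def pad (g : List α → ℕ) (w : List α) : List α :=
  List.reverseRecOn w [] fun p a padded => padded ++ a :: List.replicate (g (p ++ [a])) 0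

theorem pad_nil : pad g [] = [] := by
  simp [pad]

theorem pad_concat (p : List α) (a : α) :
    pad g (p ++ [a]) = pad g p ++ a :: List.replicate (g (p ++ [a])) 0 := by
  simp [pad]

theorem isTreeEmbedding_pad [LinearOrder α] : IsTreeEmbedding (pad g) where
  map_nil := pad_nil
  exists_letterMap p := ⟨id, strictMono_id, fun a => by
    rw [pad_concat, List.prefix_append_right_inj]
    simp⟩

theorem pad_eq_self {x : List α} (hg : ∀ p, p <+: x → g p = 0) : pad g x = x := by
  induction x using List.reverseRecOn with
  | nil => exact pad_nil
  | append_singleton p a ih =>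
    rw [pad_concat, hg _ List.prefix_rfl, ih fun q hq => hg q (hq.trans (List.prefix_append p [a]))]
    rfl

theorem length_pad_add_le [LinearOrder α] (h : d <+: e) (hne : d ≠ e) :
    (pad g d).length + g e ≤ (pad g e).length := by
  rcases e.eq_nil_or_concat' with rfl | ⟨q, a, rfl⟩
  · exact absurd (List.prefix_nil.1 h) hne
  · have hq : d <+: q := (List.prefix_concat_iff.1 h).resolve_left hne
    have := (isTreeEmbedding_pad (g := g).map_prefix hq).length_le
    simp only [pad_concat, List.length_append, List.length_cons, List.length_replicate]
    omega

theorem length_pad_le (x : List α) : (pad g x).length ≤ (x.inits.map (g · + 1)).sum := by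
  induction x using List.reverseRecOn with
  | nil => simp [pad_nil]
  | append_singleton p a ih =>
    simpa [pad_concat, List.inits_append, add_comm 1] using ih

end Padding

theorem exists_weight {ι X β : Type*} [Finite ι] [LinearOrder β] (κ : X → β) {S : ι → List X}
    {y : ι → X} (h : ∀ i, ∀ p ∈ S i, κ p < κ (y i)) :
    ∃ g : X → ℕ, (∀ i, ((S i).map (g · + 1)).sum ≤ g (y i)) ∧ ∀ p ∉ Set.range y, g p = 0 := by
  classical
  suffices hs : ∀ s : Finset X, ∃ g : X → ℕ,
      (∀ i, y i ∈ s → ((S i).map (g · + 1)).sum ≤ g (y i)) ∧ ∀ p ∉ s, g p = 0 by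
    obtain ⟨g, hg, hg0⟩ := hs (Set.finite_range y).toFinset
    exact ⟨g, fun i => hg i (by simp), fun p hp => hg0 p (by simpa using hp)⟩
  intro s
  induction s using Finset.induction_on_max_value κ with
  | empty => exact ⟨0, by simp, fun p _ => rfl⟩
  | insert a s ha hmax ih =>
    obtain ⟨g, hg, hg0⟩ := ih
    obtain ⟨M, hM⟩ := (Set.finite_range fun i => ((S i).map (g · + 1)).sum).bddAbove
    have hsum (i) (hi : κ (y i) ≤ κ a) :
        (S i).map (Function.update g a M · + 1) = (S i).map (g · + 1) := by
      refine List.map_congr_left fun p hp => ?_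
      have hpa : p ≠ a := fun he => ((h i p hp).trans_le hi).ne (congrArg κ he)
      rw [Function.update_of_ne hpa]
    refine ⟨Function.update g a M, fun i hi => ?_, fun p hp => ?_⟩
    · rcases Finset.mem_insert.1 hi with hi | hi
      · rw [hsum i (hi ▸ le_rfl), hi, Function.update_self]
        exact hM ⟨i, rfl⟩
      · rw [hsum i (hmax _ hi), Function.update_of_ne (ne_of_mem_of_not_mem hi ha)]
        exact hg i hi
    · obtain ⟨hpa, hps⟩ := not_or.1 (Finset.mem_insert.not.1 hp)
      rw [Function.update_of_ne hpa, hg0 p hps]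

section PaddingKey

variable {α ι : Type*} [LinearOrder α] {x y : ι → List α} {p : List α} {i : ι}

/-- `z` lies above the image of a word that the correspondence `x i ↦ y i` moves to the left. -/
def LeftMoved (x y : ι → List α) (z : List α) : Prop :=
  ∃ i, Branches (y i) (x i) ∧ y i <+: z

open Classical in
/-- The key by which words receive their padding: the words that are not `LeftMoved` come first,
from left to right, and the `LeftMoved` ones follow, from right to left. -/
noncomputable def paddingKey (x y : ι → List α) (z : List α) : List α ⊕ₗ (List α)ᵒᵈ :=
  if LeftMoved x y z then Sum.inrₗ (OrderDual.toDual z) else Sum.inlₗ z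

theorem lt_of_not_leftMoved (hi : ¬ y i <+: x i) (hyi : ¬ LeftMoved x y (y i)) (hp : p <+: x i) :
    p < y i := by
  rcases prefix_or_prefix_or_branches (y i) (x i) with h | h | h | h
  · exact absurd h hi
  · exact lt_of_prefix_of_ne (hp.trans h) fun he => hi (he ▸ hp)
  · exact absurd ⟨i, h, List.prefix_rfl⟩ hyi
  · rcases eq_or_ne p (x i) with rfl | hne
    · exact h.lt
    · exact (lt_of_prefix_of_ne hp hne).trans h.lt

theorem branches_of_leftMoved (hxy : ∀ i j, Branches (x i) (x j) → Branches (y i) (y j))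
    (hpm : LeftMoved x y p) (hp : p <+: x i) : Branches (y i) p := by
  obtain ⟨j, hj, hjp⟩ := hpm
  exact (hxy i j (hj.mono (hjp.trans hp) List.prefix_rfl)).mono List.prefix_rfl hjp

theorem paddingKey_lt (hxy : ∀ i j, Branches (x i) (x j) → Branches (y i) (y j))
    (hi : ¬ y i <+: x i) (hp : p <+: x i) : paddingKey x y p < paddingKey x y (y i) := by
  by_cases hpm : LeftMoved x y p
  · have h := branches_of_leftMoved hxy hpm hp
    have hyi : LeftMoved x y (y i) := ⟨i, h.mono List.prefix_rfl hp, List.prefix_rfl⟩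
    simpa only [paddingKey, if_pos hpm, if_pos hyi, Sum.Lex.inr_lt_inr_iff,
      OrderDual.toDual_lt_toDual] using h.lt
  · by_cases hyi : LeftMoved x y (y i)
    · simpa only [paddingKey, if_neg hpm, if_pos hyi] using Sum.Lex.inl_lt_inr _ _
    · simpa only [paddingKey, if_neg hpm, if_neg hyi, Sum.Lex.inl_lt_inl_iff] using
        lt_of_not_leftMoved hi hyi hp

theorem exists_length_pad_le_weight [Zero α] [Finite ι]
    (hxy : ∀ i j, Branches (x i) (x j) → Branches (y i) (y j)) :
    ∃ g : List α → ℕ, (∀ i, ¬ y i <+: x i → (pad g (x i)).length ≤ g (y i)) ∧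
      ∀ p, (∀ i, ¬ y i <+: x i → p ≠ y i) → g p = 0 := by
  obtain ⟨g, hg, hg0⟩ := exists_weight (ι := {i // ¬ y i <+: x i}) (S := fun i => (x i).inits)
    (y := fun i => y i) (paddingKey x y)
    fun i p hp => paddingKey_lt hxy i.2 ((List.mem_inits _ _).1 hp)
  refine ⟨g, fun i hi => (length_pad_le _).trans (hg ⟨i, hi⟩), fun p hp => hg0 p ?_⟩
  rintro ⟨i, rfl⟩
  exact hp i i.2 rfl

end PaddingKey

/-! ### Nodes of the maximal common ancestor tree -/

section Nodes

variable {C : List Word} {k : ℕ} {w v : Fin k → Word} {h : Word → Word}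
  {I J : Finset (Fin (k + C.length))}

/-- The element of `MCAT C w` named by the set `I` of entries; the empty set names the root. -/
noncomputable def node (C : List Word) {k : ℕ} (w : Fin k → Word)
    (I : Finset (Fin (k + C.length))) : Word :=
  listLCP (I.toList.map (Fin.append w C.get))

theorem node_empty : node C w ∅ = [] := by
  simp [node, listLCP]

theorem node_singleton (i : Fin (k + C.length)) : node C w {i} = Fin.append w C.get i := by
  simp [node, listLCP]

theorem prefix_node_iff (hI : I.Nonempty) {z : Word} :
    z <+: node C w I ↔ ∀ i ∈ I, z <+: Fin.append w C.get i := by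
  rw [node, prefix_listLCP_iff (by simpa using hI.ne_empty)]
  simp

theorem MCAT_eq_range (C : List Word) (w : Fin k → Word) : MCAT C w = Set.range (node C w) := by
  ext x
  constructor
  · rintro (rfl | ⟨I, -, rfl⟩)
    exacts [⟨∅, node_empty⟩, ⟨I, rfl⟩]
  · rintro ⟨I, rfl⟩
    rcases I.eq_empty_or_nonempty with rfl | hI
    exacts [Or.inl node_empty, Or.inr ⟨I, hI, rfl⟩]

theorem node_mem_MCAT (w : Fin k → Word) (I : Finset (Fin (k + C.length))) :
    node C w I ∈ MCAT C w :=
  MCAT_eq_range C w ▸ ⟨I, rfl⟩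

theorem exists_node_eq_lcp (I J : Finset (Fin (k + C.length))) :
    ∃ K, ∀ w, node C w K = lcp (node C w I) (node C w J) := by
  rcases I.eq_empty_or_nonempty with rfl | hI
  · exact ⟨∅, fun w => by rw [node_empty, lcp_eq_left List.nil_prefix]⟩
  rcases J.eq_empty_or_nonempty with rfl | hJ
  · exact ⟨∅, fun w => by rw [node_empty, lcp_comm, lcp_eq_left List.nil_prefix]⟩
  refine ⟨I ∪ J, fun w => eq_of_forall_prefix_iff fun z => ?_⟩
  rw [prefix_lcp_iff, prefix_node_iff hI, prefix_node_iff hJ,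
    prefix_node_iff (hI.mono Finset.subset_union_left)]
  simp only [Finset.mem_union, or_imp, forall_and]

theorem exists_node_eq_const {c : Word} (hc : c ∈ C) :
    ∃ I, ∀ w : Fin k → Word, node C w I = c := by
  obtain ⟨j, rfl⟩ := List.mem_iff_get.1 hc
  exact ⟨{Fin.natAdd k j}, fun w => by rw [node_singleton, Fin.append_right]⟩

theorem node_castAdd (w : Fin k → Word) (i : Fin k) :
    node C w {Fin.castAdd C.length i} = w i := by
  rw [node_singleton, Fin.append_left]

theorem IsInducedIso.map_append (hh : IsInducedIso C w v h) (i : Fin (k + C.length)) :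
    h (Fin.append w C.get i) = Fin.append v C.get i := by
  refine Fin.addCases (fun i => ?_) (fun j => ?_) i
  · simpa using hh.2.2.2 i
  · simpa using hh.2.2.1 _ (List.get_mem C j)

theorem IsInducedIso.map_prefix_iff (hh : IsInducedIso C w v h) :
    h (node C w I) <+: h (node C w J) ↔ node C w I <+: node C w J :=
  (hh.2.1 _ (node_mem_MCAT w I) _ (node_mem_MCAT w J)).1.symm

theorem IsInducedIso.exists_map_eq_node (hh : IsInducedIso C w v h)
    (J : Finset (Fin (k + C.length))) : ∃ I, h (node C w I) = node C v J := by
  obtain ⟨x, hx, hxJ⟩ := hh.1.surjOn (node_mem_MCAT v J)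
  obtain ⟨I, rfl⟩ := MCAT_eq_range C w ▸ hx
  exact ⟨I, hxJ⟩

-- A node is the greatest word below a set of entries, and `h` is an order isomorphism which
-- maps entries to entries.
theorem IsInducedIso.map_node (hh : IsInducedIso C w v h) (I : Finset (Fin (k + C.length))) :
    h (node C w I) = node C v I := by
  obtain ⟨J, hJ⟩ := hh.exists_map_eq_node I
  suffices h (node C w I) <+: node C v I ∧ node C w J <+: node C w I from
    antisymm this.1 (hJ ▸ hh.map_prefix_iff.2 this.2)
  rcases I.eq_empty_or_nonempty with rfl | hI
  · have hroot (I) : h (node C w ∅) <+: h (node C w I) :=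
      hh.map_prefix_iff.2 (node_empty ▸ List.nil_prefix)
    refine ⟨hJ ▸ hroot J, hh.map_prefix_iff.1 ?_⟩
    rw [hJ, node_empty]
    exact List.nil_prefix
  · have hentry (i) : h (node C w {i}) = Fin.append v C.get i := by
      rw [node_singleton, hh.map_append]
    refine ⟨(prefix_node_iff hI).2 fun i hi => ?_, (prefix_node_iff hI).2 fun i hi => ?_⟩
    · rw [← hentry, hh.map_prefix_iff, node_singleton]
      exact (prefix_node_iff hI).1 List.prefix_rfl i hi
    · rw [← node_singleton, ← hh.map_prefix_iff, hentry, hJ]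
      exact (prefix_node_iff hI).1 List.prefix_rfl i hi

theorem isInducedIso_of_map_node (hh : ∀ I, h (node C w I) = node C v I)
    (hprefix : ∀ I J, node C w I <+: node C w J ↔ node C v I <+: node C v J)
    (hlex : ∀ I J, lexLe (node C w I) (node C w J) ↔ lexLe (node C v I) (node C v J)) :
    IsInducedIso C w v h := by
  refine ⟨?_, ?_, fun c hc => ?_, fun i => ?_⟩
  · rw [MCAT_eq_range, MCAT_eq_range]
    refine ⟨Set.forall_mem_range.2 fun I => ⟨I, (hh I).symm⟩, ?_,
      Set.forall_mem_range.2 fun I => ⟨_, ⟨I, rfl⟩, hh I⟩⟩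
    rintro _ ⟨I, rfl⟩ _ ⟨J, rfl⟩ hIJ
    rw [hh, hh] at hIJ
    rwa [eq_iff_prefix_and_prefix, hprefix, hprefix, ← eq_iff_prefix_and_prefix]
  · simp only [MCAT_eq_range, Set.forall_mem_range, hh]
    exact fun I J => ⟨hprefix I J, hlex I J⟩
  · obtain ⟨I, hI⟩ := exists_node_eq_const (k := k) hc
    simpa only [hI] using hh I
  · simpa only [node_castAdd] using hh {Fin.castAdd C.length i}

theorem sameTyp_iff : SameTyp C w v ↔
    ∀ I J, (node C w I <+: node C w J ↔ node C v I <+: node C v J) ∧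
      (lexLe (node C w I) (node C w J) ↔ lexLe (node C v I) (node C v J)) := by
  constructor
  · rintro ⟨h, hh⟩ I J
    simpa only [hh.map_node] using hh.2.1 _ (node_mem_MCAT w I) _ (node_mem_MCAT w J)
  · intro hwv
    have hfac : (node C v).FactorsThrough (node C w) := fun I J hIJ => by
      rwa [eq_iff_prefix_and_prefix, ← (hwv I J).1, ← (hwv J I).1, ← eq_iff_prefix_and_prefix]
    exact ⟨Function.extend (node C w) (node C v) id, isInducedIso_of_map_node
      (hfac.extend_apply id) (fun I J => (hwv I J).1) fun I J => (hwv I J).2⟩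

theorem stretch_iff : Stretch C w v ↔ SameTyp C w v ∧ ∀ I J, node C w I <+: node C w J →
    (node C w J).length + (node C v I).length ≤
      (node C v J).length + (node C w I).length := by
  constructor
  · rintro ⟨h, hh, hs⟩
    refine ⟨⟨h, hh⟩, fun I J hIJ => ?_⟩
    rw [← hh.map_node I, ← hh.map_node J]
    rcases eq_or_ne (node C w I) (node C w J) with heq | hne
    · rw [heq, add_comm]
    · exact hs _ (node_mem_MCAT w I) _ (node_mem_MCAT w J) hIJ hne
  · rintro ⟨⟨h, hh⟩, hlen⟩
    refine ⟨h, hh, ?_⟩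
    simp only [StretchCond, MCAT_eq_range, Set.forall_mem_range, hh.map_node]
    exact fun I J hIJ _ => hlen I J hIJ

theorem contractingPair_iff (hwv : SameTyp C w v) : ContractingPair C w v ↔
    (∃ I, node C v I <+: node C w I ∧ node C v I ≠ node C w I) ∨
      ∃ I J, node C w I <+: node C w J ∧ node C w I ≠ node C w J ∧ node C v J = node C w J ∧
        node C w I <+: node C v I ∧ node C w I ≠ node C v I := by
  constructor
  · rintro ⟨h, hh, hc⟩
    simpa only [MCAT_eq_range, Set.exists_range_iff, hh.map_node] using hc
  · obtain ⟨h, hh⟩ := hwv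
    refine fun hc => ⟨h, hh, ?_⟩
    simpa only [MCAT_eq_range, Set.exists_range_iff, hh.map_node] using hc

namespace SameTyp

theorem refl (w : Fin k → Word) : SameTyp C w w :=
  sameTyp_iff.2 fun _ _ => ⟨Iff.rfl, Iff.rfl⟩

theorem symm (hwv : SameTyp C w v) : SameTyp C v w :=
  sameTyp_iff.2 fun I J => ⟨(sameTyp_iff.1 hwv I J).1.symm, (sameTyp_iff.1 hwv I J).2.symm⟩

theorem prefix_iff (hwv : SameTyp C w v) :
    node C w I <+: node C w J ↔ node C v I <+: node C v J :=
  (sameTyp_iff.1 hwv I J).1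

theorem branches_iff (hwv : SameTyp C w v) :
    Branches (node C w I) (node C w J) ↔ Branches (node C v I) (node C v J) := by
  rw [branches_iff_lexLe_and_not_prefix, branches_iff_lexLe_and_not_prefix, hwv.prefix_iff,
    (sameTyp_iff.1 hwv I J).2]

theorem eq_iff (hwv : SameTyp C w v) : node C w I = node C w J ↔ node C v I = node C v J := by
  simp only [eq_iff_prefix_and_prefix, hwv.prefix_iff]

theorem node_eq_of_mem (hwv : SameTyp C w v) (hI : node C w I ∈ C) : node C v I = node C w I := by
  obtain ⟨J, hJ⟩ := exists_node_eq_const (k := k) hI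
  rw [← hwv.eq_iff.1 (hJ w), hJ]

end SameTyp

theorem Stretch.not_contractingPair (hwv : Stretch C w v) : ¬ ContractingPair C w v := by
  obtain ⟨hst, hlen⟩ := stretch_iff.1 hwv
  rw [contractingPair_iff hst]
  rintro (⟨I, hI, hne⟩ | ⟨I, J, hIJ, -, hJ, hI, hne⟩)
  · have := hlen ∅ I (node_empty ▸ List.nil_prefix)
    simp only [node_empty, List.length_nil] at this
    exact hne (hI.eq_of_length_le this)
  · have := hlen I J hIJ
    rw [hJ] at this
    exact hne (hI.eq_of_length_le (by omega))

-- There are finitely many types over `C`, and the distances between nodes are tuples of natural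
-- numbers, so that Dickson's lemma applies.
theorem exists_lt_stretch (C : List Word) (s : ℕ → Fin k → Word) :
    ∃ i j, i < j ∧ Stretch C (s i) (s j) := by
  let N := Finset (Fin (k + C.length))
  let order (i : ℕ) : N × N → Prop × Prop := fun IJ =>
    (node C (s i) IJ.1 <+: node C (s i) IJ.2, lexLe (node C (s i) IJ.1) (node C (s i) IJ.2))
  let gap (i : ℕ) : N × N → ℕ := fun IJ =>
    (node C (s i) IJ.2).length - (node C (s i) IJ.1).length
  obtain ⟨i, j, hij, horder, hgap⟩ := (Finite.wellQuasiOrdered (α := N × N → Prop × Prop)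
    (· = ·)).prod (wellQuasiOrdered_le (α := N × N → ℕ)) fun i => (order i, gap i)
  have hst : SameTyp C (s i) (s j) := sameTyp_iff.2 fun I J => by
    simpa only [order, Prod.mk.injEq, eq_iff_iff] using congrFun horder (I, J)
  refine ⟨i, j, hij, stretch_iff.2 ⟨hst, fun I J hIJ => ?_⟩⟩
  have h₁ : (node C (s i) J).length - (node C (s i) I).length ≤
      (node C (s j) J).length - (node C (s j) I).length := hgap (I, J)
  have h₂ := hIJ.length_le
  have h₃ := (hst.prefix_iff.1 hIJ).length_le
  omega

end Nodes


/-! ### Tree embeddings over the constants -/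

section EmbeddingsOver

variable {C : List Word} {k : ℕ} {w v : Fin k → Word} {H E K : Word → Word}
  {I J : Finset (Fin (k + C.length))}

theorem comp_append {α β : Type*} {m n : ℕ} (f : α → β) (x : Fin m → α) (y : Fin n → α) :
    f ∘ Fin.append x y = Fin.append (f ∘ x) (f ∘ y) := by
  ext i
  refine Fin.addCases (fun i => ?_) (fun j => ?_) i <;> simp

/-- A tree embedding fixing all constants; such an embedding preserves types over `C`. -/
structure IsTreeEmbeddingOver (C : List Word) (H : Word → Word) : Prop
    extends IsTreeEmbedding H where
  map_const : ∀ c ∈ C, H c = c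

namespace IsTreeEmbeddingOver

theorem node_comp (hH : IsTreeEmbeddingOver C H) (w : Fin k → Word)
    (I : Finset (Fin (k + C.length))) : node C (H ∘ w) I = H (node C w I) := by
  have hC : H ∘ C.get = C.get := funext fun j => hH.map_const _ (List.get_mem C j)
  rw [node, node, hH.map_listLCP, List.map_map, comp_append, hC]

theorem sameTyp_comp (hH : IsTreeEmbeddingOver C H) (w : Fin k → Word) : SameTyp C w (H ∘ w) :=
  sameTyp_iff.2 fun I J => by
    rw [hH.node_comp, hH.node_comp, hH.prefix_iff, hH.lexLe_iff]
    exact ⟨Iff.rfl, Iff.rfl⟩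

theorem stretch_comp (hE : IsTreeEmbeddingOver C E) (hK : IsTreeEmbeddingOver C K)
    (hwv : SameTyp C w v)
    (hlen : ∀ I J, node C w I <+: node C w J → node C w I ≠ node C w J →
      (E (node C w J)).length + (K (node C v I)).length ≤
        (K (node C v J)).length + (E (node C w I)).length) :
    Stretch C (E ∘ w) (K ∘ v) := by
  rw [stretch_iff, sameTyp_iff]
  simp only [hE.node_comp, hK.node_comp, hE.prefix_iff, hK.prefix_iff, hE.lexLe_iff, hK.lexLe_iff]
  refine ⟨sameTyp_iff.1 hwv, fun I J hIJ => ?_⟩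
  by_cases hne : node C w I = node C w J
  · rw [hne, hwv.eq_iff.1 hne, add_comm]
  · exact hlen I J hIJ hne

end IsTreeEmbeddingOver

theorem isTreeEmbeddingOver_pad {g : Word → ℕ} (hC : ∀ c ∈ C, ∀ c' : Word, c' <+: c → c' ∈ C)
    (hg : ∀ c ∈ C, g c = 0) : IsTreeEmbeddingOver C (pad g) where
  toIsTreeEmbedding := isTreeEmbedding_pad
  map_const c hc := pad_eq_self fun p hp => hg p (hC c hc p hp)

theorem Stretch.isStretching (hwv : Stretch C w v) : IsStretching (node C w) (node C v) := by
  obtain ⟨hst, hlen⟩ := stretch_iff.1 hwv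
  exact
    { root := ⟨∅, node_empty, node_empty⟩
      lcp := fun I J => (exists_node_eq_lcp I J).imp fun _ hK => ⟨hK w, hK v⟩
      map_prefix := fun _ _ => hst.prefix_iff.1
      map_branches := fun _ _ => hst.branches_iff.1
      length_le := hlen }

theorem Stretch.exists_isTreeEmbeddingOver (hwv : Stretch C w v) :
    ∃ H, IsTreeEmbeddingOver C H ∧ H ∘ w = v := by
  obtain ⟨H, hH, hHv⟩ := hwv.isStretching.exists_isTreeEmbedding
  refine ⟨H, ⟨hH, fun c hc => ?_⟩, funext fun i => ?_⟩
  · obtain ⟨I, hI⟩ := exists_node_eq_const (k := k) hc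
    simpa only [hI] using hHv I
  · simpa only [node_castAdd, Function.comp_apply] using hHv {Fin.castAdd C.length i}

theorem exists_stretch_of_not_contractingPair (hC : ∀ c ∈ C, ∀ c' : Word, c' <+: c → c' ∈ C)
    (hwv : SameTyp C w v) (hnc : ¬ ContractingPair C w v) :
    ∃ E, IsTreeEmbeddingOver C E ∧ Stretch C (E ∘ w) (E ∘ v) := by
  simp only [contractingPair_iff hwv, not_or, not_exists, not_and, not_not] at hnc
  obtain ⟨hdown, hup⟩ := hnc
  obtain ⟨g, hg, hg0⟩ := exists_length_pad_le_weight (x := node C w) (y := node C v)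
    fun _ _ => hwv.branches_iff.1
  have hE : IsTreeEmbeddingOver C (pad g) := isTreeEmbeddingOver_pad hC fun c hc =>
    hg0 c fun I hI hcI => hI (hwv.symm.node_eq_of_mem (hcI ▸ hc) ▸ List.prefix_rfl)
  refine ⟨pad g, hE, hE.stretch_comp hE hwv fun I J hIJ hne => ?_⟩
  by_cases hJ : node C v J <+: node C w J
  · have hJ_eq : node C v J = node C w J := hdown J hJ
    have hI : node C v I <+: node C w I := by
      rcases List.prefix_or_prefix_of_prefix (hJ_eq ▸ hwv.prefix_iff.1 hIJ) hIJ with hI | hI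
      · exact hI
      · exact hup I J hIJ hne hJ_eq hI ▸ List.prefix_rfl
    rw [hJ_eq]
    exact Nat.add_le_add_left (hE.map_prefix hI).length_le _
  · have := hg J hJ
    have := length_pad_add_le (g := g) (hwv.prefix_iff.1 hIJ) (hwv.eq_iff.not.1 hne)
    omega

theorem exists_stretch_comp (hC : ∀ c ∈ C, ∀ c' : Word, c' <+: c → c' ∈ C)
    (hwv : SameTyp C w v) (hE : IsTreeEmbeddingOver C E) :
    ∃ K, IsTreeEmbeddingOver C K ∧ Stretch C (E ∘ w) (K ∘ v) := by
  obtain ⟨L, hL⟩ := (Set.finite_range fun I => (E (node C w I)).length).bddAbove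
  let g : Word → ℕ := fun p => if p ∈ C then 0 else L
  have hK : IsTreeEmbeddingOver C (pad g) := isTreeEmbeddingOver_pad hC fun c hc => if_pos hc
  refine ⟨pad g, hK, hE.stretch_comp hK hwv fun I J hIJ hne => ?_⟩
  have hIJ' : node C v I <+: node C v J := hwv.prefix_iff.1 hIJ
  by_cases hJ : node C v J ∈ C
  · have hI : node C v I ∈ C := hC _ hJ _ hIJ'
    rw [hwv.symm.node_eq_of_mem hJ, hwv.symm.node_eq_of_mem hI, hE.map_const _ hJ,
      hE.map_const _ hI, hK.map_const _ hJ, hK.map_const _ hI]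
  · have := length_pad_add_le (g := g) hIJ' (hwv.eq_iff.not.1 hne)
    have : (E (node C w J)).length ≤ g (node C v J) := by
      simpa only [g, if_neg hJ] using hL ⟨J, rfl⟩
    omega

end EmbeddingsOver

/-! ### Runs -/

section Sequences

variable {X : Type*} {r : X → X → Prop} {N : ℕ}

theorem exists_append_infinite {s : Fin (N + 1) → X} {ρ : ℕ → X}
    (hs : ∀ i : Fin N, r (s i.castSucc) (s i.succ)) (hρ : ∀ i, r (ρ i) (ρ (i + 1)))
    (h : s (Fin.last N) = ρ 0) :
    ∃ σ : ℕ → X, (∀ i, r (σ i) (σ (i + 1))) ∧ σ 0 = s 0 ∧ ∀ i, σ (i + N) = ρ i := by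
  induction N with
  | zero => exact ⟨ρ, hρ, h.symm, fun _ => rfl⟩
  | succ N ih =>
    obtain ⟨σ, hσ, hσ0, hσρ⟩ := ih (s := Fin.tail s) (fun i => hs i.succ) h
    refine ⟨fun i => i.casesOn (s 0) σ, fun i => ?_, rfl, hσρ⟩
    cases i with
    | zero =>
      change r (s 0) (σ 0)
      rw [hσ0]
      exact hs 0
    | succ i => exact hσ i

theorem exists_iterate_loop {s : Fin (N + 1) → X} {T : X → X} (hN : 0 < N)
    (hs : ∀ i : Fin N, r (s i.castSucc) (s i.succ)) (hT : ∀ {a b}, r a b → r (T a) (T b))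
    (h : s (Fin.last N) = T (s 0)) :
    ∃ ρ : ℕ → X, (∀ i, r (ρ i) (ρ (i + 1))) ∧ ∀ q, ρ (N * q) = T^[q] (s 0) := by
  have hT_iter (q : ℕ) {a b} (hab : r a b) : r (T^[q] a) (T^[q] b) := by
    induction q with
    | zero => exact hab
    | succ q ih => simpa only [Function.iterate_succ_apply'] using hT ih
  let ρ : ℕ → X := fun i => T^[i / N] (s (Fin.castSucc ⟨i % N, Nat.mod_lt i hN⟩))
  have hρ_castSucc (q : ℕ) (j : Fin N) : ρ (N * q + j) = T^[q] (s j.castSucc) := by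
    simp only [ρ, Nat.mul_add_div hN, Nat.div_eq_of_lt j.2, Nat.mul_add_mod, Nat.mod_eq_of_lt j.2,
      add_zero]
  have hρ_zero (q : ℕ) : ρ (N * q) = T^[q] (s 0) := hρ_castSucc q ⟨0, hN⟩
  have hρ_succ (q : ℕ) (j : Fin N) : ρ (N * q + j + 1) = T^[q] (s j.succ) := by
    rcases eq_or_ne ((j : ℕ) + 1) N with hj | hj
    · have hlast : j.succ = Fin.last N := Fin.ext hj
      rw [hlast, h, add_assoc, hj, ← Nat.mul_succ, hρ_zero, Function.iterate_succ_apply]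
    · exact hρ_castSucc q ⟨j + 1, lt_of_le_of_ne j.2 hj⟩
  refine ⟨ρ, fun i => ?_, hρ_zero⟩
  have := hT_iter (i / N) (hs ⟨i % N, Nat.mod_lt i hN⟩)
  rwa [← hρ_castSucc, ← hρ_succ, Nat.div_add_mod] at this

end Sequences

section Runs

variable {C : List Word} {Q : Type*} {n : ℕ}
  {step : (Q × (Fin n → Word)) → (Q × (Fin n → Word)) → Prop} {H : Word → Word} {f : Q}

/-- The action of a map of words on configurations. -/
def mapConfig (H : Word → Word) (c : Q × (Fin n → Word)) : Q × (Fin n → Word) :=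
  (c.1, H ∘ c.2)

theorem TypeInvariant.step_mapConfig (hstep : TypeInvariant C step)
    (hH : IsTreeEmbeddingOver C H) {c d : Q × (Fin n → Word)} (h : step c d) :
    step (mapConfig H c) (mapConfig H d) :=
  hstep _ _ _ _ _ _ h (comp_append H c.2 d.2 ▸ hH.sameTyp_comp _)

theorem exists_run_to_noncontracting_loop {ρ : ℕ → Q × (Fin n → Word)} (hρ : IsInfRun step ρ)
    (hf : ∀ k, ∃ j ≥ k, (ρ j).1 = f) :
    ∃ w : Fin n → Word,
      (∃ (N : ℕ) (r : Fin (N + 1) → Q × (Fin n → Word)),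
        IsFinRun step r ∧ r 0 = ρ 0 ∧ r (Fin.last N) = (f, w)) ∧
      ∃ (N : ℕ) (r : Fin (N + 1) → Q × (Fin n → Word)),
        0 < N ∧ IsFinRun step r ∧ r 0 = (f, w) ∧ (r (Fin.last N)).1 = f ∧
          SameTyp C w (r (Fin.last N)).2 ∧ ¬ ContractingPair C w (r (Fin.last N)).2 := by
  obtain ⟨φ, hφ, hφf⟩ := Filter.extraction_of_frequently_atTop (Filter.frequently_atTop.2 hf)
  obtain ⟨i, j, hij, hst⟩ := exists_lt_stretch C fun m => (ρ (φ m)).2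
  obtain ⟨d, hd⟩ := Nat.exists_eq_add_of_lt (hφ hij)
  rw [add_assoc] at hd
  refine ⟨(ρ (φ i)).2, ⟨φ i, fun l => ρ l, fun l => hρ l, rfl, Prod.ext (hφf i) rfl⟩,
    d + 1, fun l => ρ (φ i + l), d.succ_pos, fun l => hρ (φ i + l), Prod.ext (hφf i) rfl, ?_⟩
  simp only [Fin.val_last, ← hd]
  exact ⟨hφf j, (stretch_iff.1 hst).1, hst.not_contractingPair⟩

theorem exists_unfolding_of_noncontracting_loop (hC : ∀ c ∈ C, ∀ c' : Word, c' <+: c → c' ∈ C)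
    (hstep : TypeInvariant C step) {w : Fin n → Word} {N : ℕ}
    {r : Fin (N + 1) → Q × (Fin n → Word)} (hN : 0 < N) (hr : IsFinRun step r)
    (hr_zero : r 0 = (f, w)) (hr_last : (r (Fin.last N)).1 = f)
    (hst : SameTyp C w (r (Fin.last N)).2) (hnc : ¬ ContractingPair C w (r (Fin.last N)).2) :
    ∃ E, IsTreeEmbeddingOver C E ∧ ∃ ρ : ℕ → Q × (Fin n → Word),
      IsInfRun step ρ ∧ ρ 0 = (f, E ∘ w) ∧ ∀ k, ∃ j ≥ k, (ρ j).1 = f := by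
  obtain ⟨E, hE, hEst⟩ := exists_stretch_of_not_contractingPair hC hst hnc
  obtain ⟨G, hG, hGE⟩ := hEst.exists_isTreeEmbeddingOver
  obtain ⟨ρ, hρ, hρ_mul⟩ := exists_iterate_loop (s := fun i => mapConfig E (r i))
    (T := mapConfig G) hN (fun i => hstep.step_mapConfig hE (hr i)) (hstep.step_mapConfig hG)
    (by simp only [mapConfig, hr_zero, hr_last, hGE])
  have hstate (q : ℕ) : (ρ (N * q)).1 = f := by
    rw [hρ_mul]
    exact Function.Iterate.rec (f := mapConfig G) (fun c : Q × (Fin n → Word) => c.1 = f)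
      (a := mapConfig E (r 0)) (congrArg Prod.fst hr_zero) (fun _ hc => hc) q
  refine ⟨E, hE, ρ, hρ, ?_, fun k => ⟨N * k, Nat.le_mul_of_pos_left k hN, hstate k⟩⟩
  simpa only [mul_zero, Function.iterate_zero_apply, mapConfig, hr_zero] using hρ_mul 0

theorem exists_accepting_run_of_sameTyp (hC : ∀ c ∈ C, ∀ c' : Word, c' <+: c → c' ∈ C)
    (hstep : TypeInvariant C step) {w v : Fin n → Word} (hwv : SameTyp C w v) {N : ℕ}
    {r : Fin (N + 1) → Q × (Fin n → Word)} (hr : IsFinRun step r)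
    (hr_last : r (Fin.last N) = (f, v)) {E : Word → Word} (hE : IsTreeEmbeddingOver C E)
    {ρ : ℕ → Q × (Fin n → Word)} (hρ : IsInfRun step ρ) (hρ_zero : ρ 0 = (f, E ∘ w))
    (hf : ∀ k, ∃ j ≥ k, (ρ j).1 = f) :
    ∃ σ : ℕ → Q × (Fin n → Word),
      IsInfRun step σ ∧ (σ 0).1 = (r 0).1 ∧ ∀ k, ∃ j ≥ k, (σ j).1 = f := by
  obtain ⟨K, hK, hKst⟩ := exists_stretch_comp hC hwv hE
  obtain ⟨G, hG, hGK⟩ := hKst.exists_isTreeEmbeddingOver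
  obtain ⟨σ, hσ, hσ_zero, hσρ⟩ := exists_append_infinite
    (s := fun i => mapConfig K (r i)) (ρ := fun i => mapConfig G (ρ i))
    (fun i => hstep.step_mapConfig hK (hr i)) (fun i => hstep.step_mapConfig hG (hρ i))
    (by simp only [mapConfig, hr_last, hρ_zero, hGK])
  refine ⟨σ, hσ, hσ_zero ▸ rfl, fun k => ?_⟩
  obtain ⟨j, hj, hjf⟩ := hf k
  exact ⟨j + N, hj.trans (Nat.le_add_right j N), by rw [hσρ]; exact hjf⟩

end Runs

theorem stmt10_general (C : List Word) (hC : ∀ c ∈ C, ∀ c' : Word, c' <+: c → c' ∈ C)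
    {Q : Type*} {n : ℕ}
    (step : (Q × (Fin n → Word)) → (Q × (Fin n → Word)) → Prop)
    (hstep : TypeInvariant C step) (I F : Set Q) :
    (∃ ρ : ℕ → Q × (Fin n → Word), IsInfRun step ρ ∧ (ρ 0).1 ∈ I ∧
        ∃ f ∈ F, ∀ k : ℕ, ∃ j ≥ k, (ρ j).1 = f) ↔
    (∃ f ∈ F, ∃ w v : Fin n → Word, SameTyp C w v ∧
      (∃ (N₁ : ℕ) (r₁ : Fin (N₁ + 1) → Q × (Fin n → Word)),
        IsFinRun step r₁ ∧ (r₁ 0).1 ∈ I ∧ r₁ (Fin.last N₁) = (f, v)) ∧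
      (∃ (N₂ : ℕ) (r₂ : Fin (N₂ + 1) → Q × (Fin n → Word)),
        0 < N₂ ∧ IsFinRun step r₂ ∧ r₂ 0 = (f, w) ∧
        (r₂ (Fin.last N₂)).1 = f ∧
        SameTyp C w (r₂ (Fin.last N₂)).2 ∧
        ¬ ContractingPair C w (r₂ (Fin.last N₂)).2)) := by
  constructor
  · rintro ⟨ρ, hρ, hI, f, hF, hf⟩
    obtain ⟨w, ⟨N₁, r₁, hr₁, h_zero, h_last⟩, hloop⟩ :=
      exists_run_to_noncontracting_loop (C := C) hρ hf
    exact ⟨f, hF, w, w, SameTyp.refl w, ⟨N₁, r₁, hr₁, h_zero ▸ hI, h_last⟩, hloop⟩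
  · rintro ⟨f, hF, w, v, hwv, ⟨N₁, r₁, hr₁, hI, h_last₁⟩,
      N₂, r₂, hN₂, hr₂, h_zero, h_last₂, hst, hnc⟩
    obtain ⟨E, hE, ρ, hρ, hρ_zero, hf⟩ :=
      exists_unfolding_of_noncontracting_loop hC hstep hN₂ hr₂ h_zero h_last₂ hst hnc
    obtain ⟨σ, hσ, hσ_zero, hσf⟩ :=
      exists_accepting_run_of_sameTyp hC hstep hwv hr₁ h_last₁ hE hρ hρ_zero hf
    exact ⟨σ, hσ, hσ_zero ▸ hI, f, hF, hσf⟩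

/-- A type-invariant transition system has an accepting run if and only if there are a
final state `f`, tuples `w̄, v̄` of the same type, a finite run from an initial
configuration to `(f, v̄)`, and a noncontracting loop starting in `(f, w̄)`. -/
theorem stmt10 (C : List Word) (hC : ∀ c ∈ C, ∀ c' : Word, c' <+: c → c' ∈ C)
    {Q : Type*} [Fintype Q] {n : ℕ}
    (step : (Q × (Fin n → Word)) → (Q × (Fin n → Word)) → Prop)
    (hstep : TypeInvariant C step) (I F : Set Q) :
    (∃ ρ : ℕ → Q × (Fin n → Word), IsInfRun step ρ ∧ (ρ 0).1 ∈ I ∧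
        ∃ f ∈ F, ∀ k : ℕ, ∃ j ≥ k, (ρ j).1 = f) ↔
    (∃ f ∈ F, ∃ w v : Fin n → Word, SameTyp C w v ∧
      (∃ (N₁ : ℕ) (r₁ : Fin (N₁ + 1) → Q × (Fin n → Word)),
        IsFinRun step r₁ ∧ (r₁ 0).1 ∈ I ∧ r₁ (Fin.last N₁) = (f, v)) ∧
      (∃ (N₂ : ℕ) (r₂ : Fin (N₂ + 1) → Q × (Fin n → Word)),
        0 < N₂ ∧ IsFinRun step r₂ ∧ r₂ 0 = (f, w) ∧
        (r₂ (Fin.last N₂)).1 = f ∧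
        SameTyp C w (r₂ (Fin.last N₂)).2 ∧
        ¬ ContractingPair C w (r₂ (Fin.last N₂)).2)) :=
  stmt10_general C hC step hstep I F

end CLTL
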